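/- arXiv:1003.6021 — 2 statements merged into one kernel-verified Lean document; each statement's English description precedes it below -/
import Mathlib

section
/- Let R > 0, let (x_i)_{i∈ℕ} be points of the closed ball B̄(0,R) ⊆ ℝ², and let (c_i)_{i∈ℕ} be real numbers with ∑_i |c_i| < ∞. Then the series ℱ(x) := ∑_i (c_i/2π) log|x − x_i| converges absolutely for Lebesgue-almost every x ∈ ℝ², the resulting function ℱ is integrable on every bounded measurable subset of ℝ², and its distributional Laplacian is the sum of weighted Dirac masses: for every φ ∈ C_c^∞(ℝ²), ∫_{ℝ²} ℱ(x) Δφ(x) dx = ∑_i c_i φ(x_i). -/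
open MeasureTheory Real

/-- Partial derivative in the `α`-th coordinate direction of a function on `ℝ²`. -/
noncomputable def pd (α : Fin 2) (f : EuclideanSpace ℝ (Fin 2) → ℝ) :
    EuclideanSpace ℝ (Fin 2) → ℝ :=
  fun x => fderiv ℝ f x (EuclideanSpace.single α 1)

/-- The Laplacian `Δf = ∂₁²f + ∂₂²f` on `ℝ²`. -/
noncomputable def lap (f : EuclideanSpace ℝ (Fin 2) → ℝ) :
    EuclideanSpace ℝ (Fin 2) → ℝ :=
  fun x => ∑ α : Fin 2, pd α (pd α f) x

/-!
Since `log⁺ ‖p‖⁻¹` is integrable, `∫_s |log ‖p - a‖| dp` grows at most like `1 + log⁺ ‖a‖` in `a`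
for every bounded set `s`, so the series of logarithms converges in `L¹(s)` and may be integrated
term by term against `Δφ`. For a single term, `log ‖p‖` is the limit of `½ log (‖p‖² + ε²)`, whose
Laplacian `2ε² / (‖p‖² + ε²)²` is `2π` times an approximate identity; Green's identity moves the
Laplacian from `φ` to this regularization.
-/

open Bornology Filter Set Topology

section Series

variable {X ι E : Type*} [MeasurableSpace X] {μ : Measure X} [NormedAddCommGroup E]

lemma tsum_lintegral_enorm_ne_top_of_summable_integral_norm {f : ι → X → E}
    (hf : ∀ i, Integrable (f i) μ) (hsum : Summable fun i => ∫ a, ‖f i a‖ ∂μ) :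
    ∑' i, ∫⁻ a, ‖f i a‖ₑ ∂μ ≠ ⊤ := by
  simpa only [← ofReal_integral_norm_eq_lintegral_enorm (hf _)] using hsum.tsum_ofReal_ne_top

variable [Countable ι]

lemma ae_summable_norm_of_summable_integral_norm {f : ι → X → E}
    (hf : ∀ i, Integrable (f i) μ) (hsum : Summable fun i => ∫ a, ‖f i a‖ ∂μ) :
    ∀ᵐ a ∂μ, Summable fun i => ‖f i a‖ := by
  refine summable_norm_of_tsum_eLpNorm_ne_top le_rfl (fun i => (hf i).aestronglyMeasurable) ?_
  simpa only [eLpNorm_one_eq_lintegral_enorm] using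
    tsum_lintegral_enorm_ne_top_of_summable_integral_norm hf hsum

lemma integrable_tsum_of_summable_integral_norm [CompleteSpace E] {f : ι → X → E}
    (hf : ∀ i, Integrable (f i) μ) (hsum : Summable fun i => ∫ a, ‖f i a‖ ∂μ) :
    Integrable (fun a => ∑' i, f i a) μ := by
  have hae := ae_summable_norm_of_summable_integral_norm hf hsum
  constructor
  · refine aestronglyMeasurable_of_tendsto_ae (u := (atTop : Filter (Finset ι)))
      (f := fun t a => ∑ i ∈ t, f i a)
      (fun t => Finset.aestronglyMeasurable_fun_sum t fun i _ => (hf i).aestronglyMeasurable) ?_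
    filter_upwards [hae] with a ha using ha.of_norm.hasSum
  · calc ∫⁻ a, ‖∑' i, f i a‖ₑ ∂μ ≤ ∫⁻ a, ∑' i, ‖f i a‖ₑ ∂μ :=
          lintegral_mono fun a => enorm_tsum_le_tsum_enorm
      _ = ∑' i, ∫⁻ a, ‖f i a‖ₑ ∂μ := lintegral_tsum fun i => (hf i).aestronglyMeasurable.enorm
      _ < ⊤ := (tsum_lintegral_enorm_ne_top_of_summable_integral_norm hf hsum).lt_top

lemma hasSum_integral_mul_of_summable_integral_norm {𝕜 : Type*} [RCLike 𝕜] {f : ι → X → 𝕜}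
    {g : X → 𝕜} {C : ℝ} (hf : ∀ i, Integrable (f i) μ)
    (hsum : Summable fun i => ∫ a, ‖f i a‖ ∂μ) (hg : AEStronglyMeasurable g μ)
    (hgC : ∀ᵐ a ∂μ, ‖g a‖ ≤ C) :
    HasSum (fun i => ∫ a, f i a * g a ∂μ) (∫ a, (∑' i, f i a) * g a ∂μ) := by
  have hfg : ∀ i, Integrable (fun a => f i a * g a) μ := fun i => (hf i).mul_bdd hg hgC
  have hle : ∀ i, ∫ a, ‖f i a * g a‖ ∂μ ≤ (∫ a, ‖f i a‖ ∂μ) * C := fun i => by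
    rw [← integral_mul_const]
    refine integral_mono_ae (hfg i).norm ((hf i).norm.mul_const C) ?_
    filter_upwards [hgC] with a ha
    rw [norm_mul]
    gcongr
  simp_rw [← tsum_mul_right]
  exact hasSum_integral_of_summable_integral_norm hfg
    ((hsum.mul_right C).of_nonneg_of_le (fun i => by positivity) hle)

end Series

lemma abs_log_eq_posLog_add_posLog_inv (t : ℝ) : |log t| = log⁺ t + log⁺ t⁻¹ := by
  linarith [half_mul_log_add_log_abs (x := t), posLog_sub_posLog_inv (x := t)]

lemma abs_log_norm_sub_le {E : Type*} [SeminormedAddCommGroup E] (p a : E) :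
    |log ‖p - a‖| ≤ log⁺ ‖p‖ + log 2 + log⁺ ‖a‖ + log⁺ ‖p - a‖⁻¹ := by
  have h := posLog_norm_add_le p (-a)
  rw [← sub_eq_add_neg, norm_neg] at h
  rw [abs_log_eq_posLog_add_posLog_inv]
  linarith

lemma integrableOn_pow_mul_posLog_inv (n : ℕ) :
    IntegrableOn (fun y : ℝ => y ^ n * log⁺ y⁻¹) (Ioi 0) := by
  rw [← Ioc_union_Ioi_eq_Ioi (zero_le_one (α := ℝ))]
  refine IntegrableOn.union ?_ ?_
  · have hlog : IntegrableOn log (Ioc 0 1) :=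
      (intervalIntegrable_iff_integrableOn_Ioc_of_le zero_le_one).1
        intervalIntegral.intervalIntegrable_log'
    have hposLog : IntegrableOn (fun y : ℝ => log⁺ y⁻¹) (Ioc 0 1) := by
      simpa only [posLog_apply, log_inv, max_comm, Pi.neg_apply, IntegrableOn] using
        hlog.neg.pos_part
    refine hposLog.bdd_mul (c := 1) (by fun_prop) ?_
    refine ae_restrict_of_forall_mem measurableSet_Ioc fun y hy => ?_
    rw [norm_of_nonneg (pow_nonneg hy.1.le n)]
    exact pow_le_one₀ hy.1.le hy.2
  · refine integrableOn_zero.congr_fun (fun y (hy : 1 < y) => ?_) measurableSet_Ioi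
    have hinv : |y⁻¹| ≤ 1 := by
      rw [abs_of_pos (by positivity)]
      exact inv_le_one_of_one_le₀ hy.le
    rw [(posLog_eq_zero_iff _).2 hinv, mul_zero]

lemma integrableOn_of_locallyIntegrable_of_isBounded {X F : Type*} [PseudoMetricSpace X]
    [ProperSpace X] [MeasurableSpace X] [NormedAddCommGroup F] {μ : Measure X} {f : X → F}
    {s : Set X} (hf : LocallyIntegrable f μ) (hs : IsBounded s) : IntegrableOn f s μ :=
  (hf.integrableOn_isCompact hs.isCompact_closure).mono_set subset_closure

section LogNorm

variable {E : Type*} [NormedAddCommGroup E] [NormedSpace ℝ E] [FiniteDimensional ℝ E]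
  [Nontrivial E] [MeasurableSpace E] [BorelSpace E] (μ : Measure E) [μ.IsAddHaarMeasure]

lemma integrable_posLog_inv_norm : Integrable (fun p : E => log⁺ ‖p‖⁻¹) μ :=
  (integrable_fun_norm_addHaar μ (f := fun y => log⁺ y⁻¹)).2 (integrableOn_pow_mul_posLog_inv _)

lemma locallyIntegrable_log_norm_sub (a : E) : LocallyIntegrable (fun p => log ‖p - a‖) μ := by
  simp_rw [← posLog_sub_posLog_inv]
  have hcont : Continuous fun p : E => log⁺ ‖p - a‖ := by fun_prop
  exact hcont.locallyIntegrable.sub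
    ((integrable_posLog_inv_norm μ).comp_sub_right a).locallyIntegrable

lemma exists_setIntegral_abs_log_norm_sub_le {s : Set E} (hs : IsBounded s) :
    ∃ C, ∀ a : E, ∫ p in s, |log ‖p - a‖| ∂μ ≤ C * (1 + log⁺ ‖a‖) := by
  set A := ∫ p in s, (log⁺ ‖p‖ + log 2) ∂μ
  set B := ∫ p : E, log⁺ ‖p‖⁻¹ ∂μ with hB
  have hA0 : 0 ≤ A := integral_nonneg fun p => add_nonneg posLog_nonneg (log_nonneg one_le_two)
  have hB0 : 0 ≤ B := integral_nonneg fun p => posLog_nonneg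
  refine ⟨A + μ.real s + B, fun a => ?_⟩
  have hfar : IntegrableOn (fun p : E => log⁺ ‖p‖ + log 2) s μ :=
    integrableOn_of_locallyIntegrable_of_isBounded
      (Continuous.locallyIntegrable (by fun_prop)) hs
  have hconst : IntegrableOn (fun _ : E => log⁺ ‖a‖) s μ := integrableOn_const hs.measure_lt_top.ne
  have hnear : Integrable (fun p => log⁺ ‖p - a‖⁻¹) μ :=
    (integrable_posLog_inv_norm μ).comp_sub_right a
  have hnear_le : ∫ p in s, log⁺ ‖p - a‖⁻¹ ∂μ ≤ B := by
    rw [hB, ← integral_sub_right_eq_self (fun p => log⁺ ‖p‖⁻¹) a]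
    exact setIntegral_le_integral hnear (ae_of_all _ fun p => posLog_nonneg)
  calc ∫ p in s, |log ‖p - a‖| ∂μ
      ≤ ∫ p in s, (log⁺ ‖p‖ + log 2 + log⁺ ‖a‖ + log⁺ ‖p - a‖⁻¹) ∂μ :=
        integral_mono
          (integrableOn_of_locallyIntegrable_of_isBounded
            (locallyIntegrable_log_norm_sub μ a) hs).abs
          ((hfar.add hconst).add hnear.integrableOn) fun p => abs_log_norm_sub_le p a
    _ = A + μ.real s * log⁺ ‖a‖ + ∫ p in s, log⁺ ‖p - a‖⁻¹ ∂μ := by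
        rw [integral_add (by exact hfar.add hconst) hnear.integrableOn, integral_add hfar hconst,
          setIntegral_const, smul_eq_mul]
    _ ≤ (A + μ.real s + B) * (1 + log⁺ ‖a‖) := by
        have hL : 0 ≤ log⁺ ‖a‖ := posLog_nonneg
        nlinarith [mul_nonneg hA0 hL, mul_nonneg hB0 hL, measureReal_nonneg (μ := μ) (s := s)]

end LogNorm

section LogSeries

variable {E ι : Type*} [NormedAddCommGroup E] [NormedSpace ℝ E] [FiniteDimensional ℝ E]
  [Nontrivial E] [MeasurableSpace E] [BorelSpace E] (μ : Measure E) [μ.IsAddHaarMeasure]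
  {x : ι → E} {w : ι → ℝ}

lemma integrableOn_mul_log_norm_sub {s : Set E} (hs : IsBounded s) (b : ℝ) (a : E) :
    IntegrableOn (fun p => b * log ‖p - a‖) s μ :=
  (integrableOn_of_locallyIntegrable_of_isBounded (locallyIntegrable_log_norm_sub μ a) hs).const_mul
    b

lemma summable_setIntegral_norm_mul_log_norm_sub
    (hw : Summable fun i => |w i| * (1 + log⁺ ‖x i‖)) {s : Set E} (hs : IsBounded s) :
    Summable fun i => ∫ p in s, ‖w i * log ‖p - x i‖‖ ∂μ := by
  obtain ⟨C, hC⟩ := exists_setIntegral_abs_log_norm_sub_le μ hs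
  refine (hw.mul_right C).of_nonneg_of_le (fun i => by positivity) fun i => ?_
  calc ∫ p in s, ‖w i * log ‖p - x i‖‖ ∂μ = |w i| * ∫ p in s, |log ‖p - x i‖| ∂μ := by
        simp_rw [norm_mul, norm_eq_abs, integral_const_mul]
    _ ≤ |w i| * (C * (1 + log⁺ ‖x i‖)) := by grw [hC]
    _ = |w i| * (1 + log⁺ ‖x i‖) * C := by ring

variable [Countable ι]

lemma integrableOn_tsum_mul_log_norm_sub (hw : Summable fun i => |w i| * (1 + log⁺ ‖x i‖))
    {s : Set E} (hs : IsBounded s) : IntegrableOn (fun p => ∑' i, w i * log ‖p - x i‖) s μ :=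
  integrable_tsum_of_summable_integral_norm
    (fun i => integrableOn_mul_log_norm_sub μ hs (w i) (x i))
    (summable_setIntegral_norm_mul_log_norm_sub μ hw hs)

lemma ae_summable_abs_mul_log_norm_sub (hw : Summable fun i => |w i| * (1 + log⁺ ‖x i‖)) :
    ∀ᵐ p ∂μ, Summable fun i => |w i * log ‖p - x i‖| := by
  rw [← Measure.restrict_univ (μ := μ), ← Metric.iUnion_ball_nat (0 : E), ae_restrict_iUnion_iff]
  intro n
  have hball : IsBounded (Metric.ball (0 : E) n) := Metric.isBounded_ball
  simpa only [← norm_eq_abs] using ae_summable_norm_of_summable_integral_norm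
    (f := fun i p => w i * log ‖p - x i‖)
    (fun i => integrableOn_mul_log_norm_sub μ hball (w i) (x i))
    (summable_setIntegral_norm_mul_log_norm_sub μ hw hball)

lemma hasSum_integral_mul_log_norm_sub_mul (hw : Summable fun i => |w i| * (1 + log⁺ ‖x i‖))
    {g : E → ℝ} (hg : Continuous g) (hgs : HasCompactSupport g) :
    HasSum (fun i => w i * ∫ p, log ‖p - x i‖ * g p ∂μ)
      (∫ p, (∑' i, w i * log ‖p - x i‖) * g p ∂μ) := by
  have hs : IsBounded (tsupport g) := hgs.isCompact.isBounded
  obtain ⟨C, hC⟩ := hgs.exists_bound_of_continuous hg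
  have hset : ∀ f : E → ℝ, ∫ p in tsupport g, f p * g p ∂μ = ∫ p, f p * g p ∂μ := fun f =>
    setIntegral_eq_integral_of_forall_compl_eq_zero fun p hp => by
      rw [image_eq_zero_of_notMem_tsupport hp, mul_zero]
  have hsum := hasSum_integral_mul_of_summable_integral_norm
    (fun i => integrableOn_mul_log_norm_sub μ hs (w i) (x i))
    (summable_setIntegral_norm_mul_log_norm_sub μ hw hs) hg.aestronglyMeasurable (ae_of_all _ hC)
  simpa only [hset, mul_assoc, integral_const_mul] using hsum

end LogSeries

section Laplacian

local notation "ℝ²" => EuclideanSpace ℝ (Fin 2)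

variable {u v : ℝ² → ℝ}

lemma contDiff_pd {n : WithTop ℕ∞} (α : Fin 2) (hu : ContDiff ℝ (n + 1) u) :
    ContDiff ℝ n (pd α u) :=
  (hu.fderiv_right le_rfl).clm_apply contDiff_const

lemma hasCompactSupport_pd (α : Fin 2) (hu : HasCompactSupport u) :
    HasCompactSupport (pd α u) :=
  hu.fderiv_apply ℝ _

lemma continuous_pd_pd (α : Fin 2) (hu : ContDiff ℝ 2 u) : Continuous (pd α (pd α u)) :=
  (contDiff_pd (n := 0) α (contDiff_pd (n := 1) α hu)).continuous

lemma continuous_lap (hu : ContDiff ℝ 2 u) : Continuous (lap u) :=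
  continuous_finsetSum _ fun α _ => continuous_pd_pd α hu

lemma hasCompactSupport_lap (hu : HasCompactSupport u) : HasCompactSupport (lap u) := by
  have hlap : lap u = pd 0 (pd 0 u) + pd 1 (pd 1 u) := by
    ext p
    simp only [lap, Fin.sum_univ_two, Pi.add_apply]
  rw [hlap]
  exact (hasCompactSupport_pd 0 (hasCompactSupport_pd 0 hu)).add
    (hasCompactSupport_pd 1 (hasCompactSupport_pd 1 hu))

lemma lap_comp_add_right (u : ℝ² → ℝ) (a : ℝ²) :
    lap (fun q => u (q + a)) = fun p => lap u (p + a) := by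
  have hpd : ∀ (α : Fin 2) (f : ℝ² → ℝ), pd α (fun q => f (q + a)) = fun p => pd α f (p + a) := by
    intro α f
    ext p
    rw [pd, fderiv_comp_add_right, pd]
  ext p
  simp only [lap, hpd]

lemma integral_mul_pd_eq_neg_pd_mul (α : Fin 2) (hu : ContDiff ℝ 1 u) (hv : ContDiff ℝ 1 v)
    (hvs : HasCompactSupport v) : ∫ p, u p * pd α v p = -∫ p, pd α u p * v p := by
  have hdu : Continuous (pd α u) := (contDiff_pd (n := 0) α hu).continuous
  have hdv : Continuous (pd α v) := (contDiff_pd (n := 0) α hv).continuous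
  exact integral_mul_fderiv_eq_neg_fderiv_mul_of_integrable
    ((hdu.mul hv.continuous).integrable_of_hasCompactSupport hvs.mul_left)
    ((hu.continuous.mul hdv).integrable_of_hasCompactSupport (hasCompactSupport_pd α hvs).mul_left)
    ((hu.continuous.mul hv.continuous).integrable_of_hasCompactSupport hvs.mul_left)
    (fun p _ => hu.differentiable one_ne_zero p) (fun p _ => hv.differentiable one_ne_zero p)

lemma integral_mul_lap_eq_integral_lap_mul (hu : ContDiff ℝ 2 u) (hv : ContDiff ℝ 2 v)
    (hvs : HasCompactSupport v) : ∫ p, u p * lap v p = ∫ p, lap u p * v p := by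
  have hu1 : ContDiff ℝ 1 u := hu.of_le one_le_two
  have hv1 : ContDiff ℝ 1 v := hv.of_le one_le_two
  simp_rw [lap, Finset.mul_sum, Finset.sum_mul]
  rw [integral_finsetSum, integral_finsetSum]
  · refine Finset.sum_congr rfl fun α _ => ?_
    rw [integral_mul_pd_eq_neg_pd_mul α hu1 (contDiff_pd α hv) (hasCompactSupport_pd α hvs),
      integral_mul_pd_eq_neg_pd_mul α (contDiff_pd α hu) hv1 hvs, neg_neg]
  · exact fun α _ => ((continuous_pd_pd α hu).mul
      hv.continuous).integrable_of_hasCompactSupport hvs.mul_left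
  · exact fun α _ => (hu.continuous.mul
      (continuous_pd_pd α hv)).integrable_of_hasCompactSupport
      (hasCompactSupport_pd α (hasCompactSupport_pd α hvs)).mul_left

end Laplacian

/-- The regularization `½ log (‖p‖² + ε²)` of `log ‖p‖`, which is smooth for `ε ≠ 0`. -/
noncomputable def regLogNorm {E : Type*} [Norm E] (ε : ℝ) (p : E) : ℝ :=
  1 / 2 * log (‖p‖ ^ 2 + ε ^ 2)

section RegLogNorm

variable {E : Type*} [NormedAddCommGroup E] {ε : ℝ} {p : E}

lemma continuous_regLogNorm (hε : ε ≠ 0) : Continuous (regLogNorm (E := E) ε) :=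
  continuous_const.mul (Continuous.log (by fun_prop) fun p => by positivity)

lemma regLogNorm_zero_left (p : E) : regLogNorm 0 p = log ‖p‖ := by
  simp [regLogNorm]

lemma tendsto_regLogNorm (hp : p ≠ 0) :
    Tendsto (fun ε => regLogNorm ε p) (𝓝 0) (𝓝 (log ‖p‖)) := by
  have hcont : ContinuousAt (fun ε => regLogNorm ε p) 0 :=
    continuousAt_const.mul (ContinuousAt.log (by fun_prop) (by simpa using hp))
  simpa only [regLogNorm_zero_left] using hcont.tendsto

lemma regLogNorm_le_regLogNorm {δ : ℝ} (hp : p ≠ 0) (hδ : 0 ≤ δ) (hδε : δ ≤ ε) :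
    regLogNorm δ p ≤ regLogNorm ε p := by
  have : 0 < ‖p‖ := norm_pos_iff.2 hp
  unfold regLogNorm
  gcongr

lemma abs_regLogNorm_le (hp : p ≠ 0) (hε : 0 ≤ ε) (hε1 : ε ≤ 1) :
    |regLogNorm ε p| ≤ |log ‖p‖| + |regLogNorm 1 p| := by
  have hlower : log ‖p‖ ≤ regLogNorm ε p := by
    rw [← regLogNorm_zero_left]
    exact regLogNorm_le_regLogNorm hp le_rfl hε
  have hupper : regLogNorm ε p ≤ regLogNorm 1 p := regLogNorm_le_regLogNorm hp hε hε1
  exact (abs_le_max_abs_abs hlower hupper).trans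
    (max_le_add_of_nonneg (abs_nonneg _) (abs_nonneg _))

lemma tendsto_integral_regLogNorm_mul [NormedSpace ℝ E] [FiniteDimensional ℝ E] [Nontrivial E]
    [MeasurableSpace E] [BorelSpace E] (μ : Measure E) [μ.IsAddHaarMeasure] {g : E → ℝ}
    (hg : Continuous g) (hgs : HasCompactSupport g) :
    Tendsto (fun ε => ∫ p, regLogNorm ε p * g p ∂μ) (𝓝[>] 0) (𝓝 (∫ p, log ‖p‖ * g p ∂μ)) := by
  have hlog : Integrable (fun p => log ‖p‖ * g p) μ := by
    simpa only [sub_zero, smul_eq_mul] using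
      (locallyIntegrable_log_norm_sub μ 0).integrable_smul_right_of_hasCompactSupport hg hgs
  have hreg : Integrable (fun p => regLogNorm 1 p * g p) μ :=
    ((continuous_regLogNorm one_ne_zero).mul hg).integrable_of_hasCompactSupport hgs.mul_left
  refine tendsto_integral_filter_of_dominated_convergence
    (fun p => |log ‖p‖ * g p| + |regLogNorm 1 p * g p|) ?_ ?_ (hlog.abs.add hreg.abs) ?_
  · filter_upwards [self_mem_nhdsWithin] with ε hε
    exact ((continuous_regLogNorm (ne_of_gt hε)).mul hg).aestronglyMeasurable
  · filter_upwards [Ioc_mem_nhdsGT zero_lt_one] with ε hε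
    filter_upwards [Measure.ae_ne μ 0] with p hp
    rw [norm_eq_abs, abs_mul, abs_mul, abs_mul, ← add_mul]
    gcongr
    exact abs_regLogNorm_le hp hε.1.le hε.2
  · filter_upwards [Measure.ae_ne μ 0] with p hp
    exact ((tendsto_regLogNorm hp).mono_left nhdsWithin_le_nhds).mul_const _

lemma contDiff_regLogNorm {F : Type*} [NormedAddCommGroup F] [InnerProductSpace ℝ F]
    {n : WithTop ℕ∞} (hε : ε ≠ 0) : ContDiff ℝ n (regLogNorm (E := F) ε) :=
  contDiff_const.mul
    (((contDiff_norm_sq ℝ).add contDiff_const).log fun p => by positivity)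

end RegLogNorm

section FundamentalSolution

local notation "ℝ²" => EuclideanSpace ℝ (Fin 2)

variable {ε : ℝ}

lemma pd_regLogNorm (hε : ε ≠ 0) (α : Fin 2) :
    pd α (regLogNorm ε) = fun p => p α * (‖p‖ ^ 2 + ε ^ 2)⁻¹ := by
  ext p
  have hpos : ‖p‖ ^ 2 + ε ^ 2 ≠ 0 := by positivity
  have hlog : HasFDerivAt (regLogNorm ε) _ p :=
    (((hasStrictFDerivAt_norm_sq p).hasFDerivAt.add_const (ε ^ 2)).log hpos).const_mul (1 / 2)
  rw [pd, hlog.fderiv]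
  simp only [one_div, smul_apply, coe_innerSL_apply, EuclideanSpace.inner_single_right,
    conj_trivial, one_mul, nsmul_eq_mul, Nat.cast_ofNat, smul_eq_mul]
  field_simp

lemma pd_pd_regLogNorm (hε : ε ≠ 0) (α : Fin 2) (p : ℝ²) :
    pd α (pd α (regLogNorm ε)) p =
      (‖p‖ ^ 2 + ε ^ 2)⁻¹ - 2 * p α ^ 2 / (‖p‖ ^ 2 + ε ^ 2) ^ 2 := by
  have hpos : ‖p‖ ^ 2 + ε ^ 2 ≠ 0 := by positivity
  have hinv := (hasDerivAt_inv hpos).comp_hasFDerivAt p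
    ((hasStrictFDerivAt_norm_sq p).hasFDerivAt.add_const (ε ^ 2))
  have hmul : HasFDerivAt (fun q : ℝ² => q α * (‖q‖ ^ 2 + ε ^ 2)⁻¹) _ p :=
    (EuclideanSpace.proj α : ℝ² →L[ℝ] ℝ).hasFDerivAt.mul hinv
  rw [pd_regLogNorm hε, pd, hmul.fderiv]
  simp only [PiLp.proj_apply, neg_smul, smul_neg, add_apply, neg_apply, smul_apply,
    coe_innerSL_apply, EuclideanSpace.inner_single_right, conj_trivial, one_mul, nsmul_eq_mul,
    Nat.cast_ofNat, smul_eq_mul, PiLp.single_eq_same, mul_one]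
  field_simp
  ring

lemma lap_regLogNorm (hε : ε ≠ 0) (p : ℝ²) :
    lap (regLogNorm ε) p = 2 * ε ^ 2 / (‖p‖ ^ 2 + ε ^ 2) ^ 2 := by
  have hpos : ‖p‖ ^ 2 + ε ^ 2 ≠ 0 := by positivity
  have hnorm : ‖p‖ ^ 2 = p 0 ^ 2 + p 1 ^ 2 := by
    rw [EuclideanSpace.real_norm_sq_eq, Fin.sum_univ_two]
  simp only [lap, Fin.sum_univ_two, pd_pd_regLogNorm hε]
  field_simp
  linear_combination 2 * hnorm

/-- The probability density `1 / (π (‖q‖² + 1)²)` on the plane. Its dilates are the Laplacians of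
`regLogNorm ε`, up to the factor `2π`. -/
noncomputable def bubble (q : ℝ²) : ℝ :=
  1 / (π * (‖q‖ ^ 2 + 1) ^ 2)

lemma bubble_nonneg (q : ℝ²) : 0 ≤ bubble q := by
  unfold bubble
  positivity

lemma lap_regLogNorm_eq_bubble (hε : ε ≠ 0) (p : ℝ²) :
    lap (regLogNorm ε) p = 2 * π * (ε⁻¹ ^ 2 * bubble (ε⁻¹ • p)) := by
  rw [lap_regLogNorm hε, bubble, norm_smul, mul_pow, norm_eq_abs, sq_abs]
  field_simp

lemma integral_Ioi_mul_inv_sq_add_one_sq :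
    ∫ y in Ioi (0 : ℝ), y * (1 / (π * (y ^ 2 + 1) ^ 2)) = 1 / (2 * π) := by
  have hderiv : ∀ y ∈ Ici (0 : ℝ), HasDerivAt (fun y : ℝ => -(1 / (2 * π)) * (y ^ 2 + 1)⁻¹)
      (y * (1 / (π * (y ^ 2 + 1) ^ 2))) y := fun y _ => by
    have hpos : y ^ 2 + 1 ≠ 0 := by positivity
    convert! (((hasDerivAt_pow 2 y).add_const 1).fun_inv hpos).const_mul (-(1 / (2 * π))) using 1
    field_simp
    norm_num [mul_comm]
  have hlim : Tendsto (fun y : ℝ => -(1 / (2 * π)) * (y ^ 2 + 1)⁻¹) atTop (𝓝 0) := by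
    have htop : Tendsto (fun y : ℝ => y ^ 2 + 1) atTop atTop :=
      tendsto_atTop_add_const_right _ _ (tendsto_pow_atTop two_ne_zero)
    simpa only [mul_zero, Pi.inv_apply] using htop.inv_tendsto_atTop.const_mul (-(1 / (2 * π)))
  have hnonneg : ∀ y ∈ Ioi (0 : ℝ), 0 ≤ y * (1 / (π * (y ^ 2 + 1) ^ 2)) := fun y hy =>
    mul_nonneg (le_of_lt hy) (by positivity)
  rw [integral_Ioi_of_hasDerivAt_of_nonneg' hderiv hnonneg hlim]
  norm_num

lemma integral_bubble : ∫ q, bubble q = 1 := by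
  unfold bubble
  rw [integral_fun_norm_addHaar volume (fun y => 1 / (π * (y ^ 2 + 1) ^ 2))]
  have hball : volume.real (Metric.ball (0 : ℝ²) 1) = π := by
    simp [Measure.real, pi_pos.le]
  simp only [finrank_euclideanSpace, Fintype.card_fin, Nat.add_one_sub_one, pow_one, smul_eq_mul,
    nsmul_eq_mul, integral_Ioi_mul_inv_sq_add_one_sq, hball]
  field_simp
  norm_num

lemma tendsto_norm_sq_mul_bubble_cobounded :
    Tendsto (fun q => ‖q‖ ^ 2 * bubble q) (cobounded ℝ²) (𝓝 0) := by
  have hnorm : Tendsto (fun q : ℝ² => ‖q‖ ^ 2) (cobounded ℝ²) atTop :=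
    (tendsto_pow_atTop two_ne_zero).comp tendsto_norm_cobounded_atTop
  have hbound : Tendsto (fun q : ℝ² => π⁻¹ * (‖q‖ ^ 2 + 1)⁻¹) (cobounded ℝ²) (𝓝 0) := by
    simpa only [mul_zero, Pi.inv_apply] using
      (tendsto_atTop_add_const_right _ 1 hnorm).inv_tendsto_atTop.const_mul π⁻¹
  refine squeeze_zero (fun q => mul_nonneg (by positivity) (bubble_nonneg q)) (fun q => ?_) hbound
  rw [bubble]
  field_simp
  linarith

lemma tendsto_integral_lap_regLogNorm_mul {g : ℝ² → ℝ} (hg : Integrable g)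
    (hg0 : ContinuousAt g 0) :
    Tendsto (fun ε => ∫ p, lap (regLogNorm ε) p * g p) (𝓝[>] 0) (𝓝 (2 * π * g 0)) := by
  have hpeak : Tendsto (fun b : ℝ => ∫ p : ℝ², (b ^ 2 * bubble (b • p)) * g p) atTop
      (𝓝 (g 0)) := by
    simpa only [finrank_euclideanSpace, Fintype.card_fin, smul_eq_mul] using
      tendsto_integral_comp_smul_smul_of_integrable (μ := volume) bubble_nonneg integral_bubble
        (by simpa only [finrank_euclideanSpace, Fintype.card_fin] using
          tendsto_norm_sq_mul_bubble_cobounded) hg hg0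
  refine ((hpeak.comp tendsto_inv_nhdsGT_zero).const_mul (2 * π)).congr' ?_
  filter_upwards [self_mem_nhdsWithin] with ε hε
  simp only [Function.comp_apply, lap_regLogNorm_eq_bubble (ne_of_gt hε), mul_assoc,
    integral_const_mul]

variable {φ : ℝ² → ℝ}

lemma integral_log_norm_mul_lap (hφ : ContDiff ℝ 2 φ) (hφs : HasCompactSupport φ) :
    ∫ p, log ‖p‖ * lap φ p = 2 * π * φ 0 := by
  have hlog := tendsto_integral_regLogNorm_mul volume (continuous_lap hφ)
    (hasCompactSupport_lap hφs)
  have hlap := tendsto_integral_lap_regLogNorm_mul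
    (hφ.continuous.integrable_of_hasCompactSupport hφs) hφ.continuous.continuousAt
  refine tendsto_nhds_unique hlog (hlap.congr' ?_)
  filter_upwards [self_mem_nhdsWithin] with ε hε
  exact (integral_mul_lap_eq_integral_lap_mul (contDiff_regLogNorm (ne_of_gt hε)) hφ hφs).symm

lemma integral_log_norm_sub_mul_lap (hφ : ContDiff ℝ 2 φ) (hφs : HasCompactSupport φ) (a : ℝ²) :
    ∫ p, log ‖p - a‖ * lap φ p = 2 * π * φ a := by
  have htranslate := integral_log_norm_mul_lap (φ := fun q => φ (q + a))
    (hφ.comp (contDiff_id.add contDiff_const)) (hφs.comp_homeomorph (Homeomorph.addRight a))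
  rw [lap_comp_add_right, zero_add] at htranslate
  rw [← htranslate, ← integral_add_right_eq_self _ a]
  simp only [add_sub_cancel_right]

end FundamentalSolution

theorem log_potential_of_summable_weights_general {ι : Type*} [Countable ι]
    (x : ι → EuclideanSpace ℝ (Fin 2)) (c : ι → ℝ)
    (hc : Summable fun i => |c i| * (1 + log⁺ ‖x i‖)) :
    (∀ᵐ p : EuclideanSpace ℝ (Fin 2),
      Summable fun i => |c i / (2 * π) * Real.log ‖p - x i‖|) ∧
    (∀ A : Set (EuclideanSpace ℝ (Fin 2)), IsBounded A →
      IntegrableOn (fun p => ∑' i, c i / (2 * π) * Real.log ‖p - x i‖) A volume) ∧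
    (∀ φ : EuclideanSpace ℝ (Fin 2) → ℝ, ContDiff ℝ 2 φ → HasCompactSupport φ →
      HasSum (fun i => c i * φ (x i))
        (∫ p : EuclideanSpace ℝ (Fin 2),
          (∑' i, c i / (2 * π) * Real.log ‖p - x i‖) * lap φ p)) := by
  have hw : Summable fun i => |c i / (2 * π)| * (1 + log⁺ ‖x i‖) := by
    simpa only [abs_div, div_mul_eq_mul_div] using hc.div_const |2 * π|
  refine ⟨ae_summable_abs_mul_log_norm_sub volume hw,
    fun A hA => integrableOn_tsum_mul_log_norm_sub volume hw hA, fun φ hφ hφs => ?_⟩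
  have hsum := hasSum_integral_mul_log_norm_sub_mul volume hw (continuous_lap hφ)
    (hasCompactSupport_lap hφs)
  have hterm : ∀ i, c i / (2 * π) * (2 * π * φ (x i)) = c i * φ (x i) := fun i => by field_simp
  simpa only [integral_log_norm_sub_mul_lap hφ hφs, hterm] using hsum

lemma summable_abs_mul_one_add_posLog_norm {E ι : Type*} [SeminormedAddCommGroup E] {R : ℝ}
    {x : ι → E} (hx : ∀ i, x i ∈ Metric.closedBall 0 R) {c : ι → ℝ}
    (hc : Summable fun i => |c i|) : Summable fun i => |c i| * (1 + log⁺ ‖x i‖) := by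
  refine (hc.mul_right (1 + log⁺ R)).of_nonneg_of_le
    (fun i => mul_nonneg (abs_nonneg _) (add_nonneg zero_le_one posLog_nonneg)) fun i => ?_
  have hxR : log⁺ ‖x i‖ ≤ log⁺ R :=
    posLog_le_posLog (norm_nonneg _) (mem_closedBall_zero_iff.1 (hx i))
  gcongr

/-- **Logarithmic potential of a countable family of screw dislocations**
(construction in the proof of Theorem 2.4 of the paper).  If the points `x i` lie in
`B̄(0,R)` and `∑ |c i| < ∞`, then `ℱ(p) = ∑_i (c i / 2π) log |p − x i|` converges
absolutely for a.e. `p`, is integrable on every bounded measurable set, and solves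
`Δℱ = ∑_i c i δ_{x i}` distributionally. -/
theorem log_potential_of_summable_weights
    (R : ℝ) (hR : 0 < R) (x : ℕ → EuclideanSpace ℝ (Fin 2))
    (hx : ∀ i, x i ∈ Metric.closedBall (0 : EuclideanSpace ℝ (Fin 2)) R)
    (c : ℕ → ℝ) (hc : Summable fun i => |c i|) :
    (∀ᵐ p : EuclideanSpace ℝ (Fin 2),
      Summable fun i => |c i / (2 * π) * Real.log ‖p - x i‖|) ∧
    (∀ A : Set (EuclideanSpace ℝ (Fin 2)), MeasurableSet A → Bornology.IsBounded A →
      IntegrableOn (fun p => ∑' i, c i / (2 * π) * Real.log ‖p - x i‖) A volume) ∧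
    (∀ φ : EuclideanSpace ℝ (Fin 2) → ℝ, ContDiff ℝ (⊤ : ℕ∞) φ → HasCompactSupport φ →
      ∫ p : EuclideanSpace ℝ (Fin 2),
          (∑' i, c i / (2 * π) * Real.log ‖p - x i‖) * lap φ p
        = ∑' i, c i * φ (x i)) := by
  obtain ⟨hae, hint, hlap⟩ := log_potential_of_summable_weights_general x c
    (summable_abs_mul_one_add_posLog_norm hx hc)
  exact ⟨hae, fun A _ => hint A, fun φ hφ hφs =>
    (hlap φ (mod_cast contDiff_infty.1 hφ 2) hφs).tsum_eq.symm⟩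
end

section
/- Let R > 0, let (x_i)_{i∈ℕ} be points of the closed ball B̄(0,R) ⊆ ℝ², and let (c_i)_{i∈ℕ} be real numbers with ∑_i |c_i| < ∞. Set ℱ(x) := ∑_i (c_i/2π) log|x − x_i| and, for α ∈ {1,2}, G_α(x) := ∑_i (c_i/2π) (x − x_i)_α / |x − x_i|². Then both series converge absolutely for Lebesgue-almost every x ∈ ℝ², ℱ and G₁, G₂ are integrable on every bounded measurable subset of ℝ², and G is the distributional gradient of ℱ: for every φ ∈ C_c^∞(ℝ²) and α ∈ {1,2}, ∫_{ℝ²} ℱ(x) ∂_αφ(x) dx = −∫_{ℝ²} G_α(x) φ(x) dx. -/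
open MeasureTheory Real

/-!
The logarithm `log ‖·‖` is the limit of the smooth functions `½ log (‖·‖² + ε)`, whose derivatives
`⟪v, ·⟫ / (‖·‖² + ε)` are dominated by `‖v‖ ‖·‖⁻¹`, which is locally integrable in dimension at
least two. Weak derivatives pass to dominated limits, so `⟪v, ·⟫ / ‖·‖²` is the weak derivative of
`log ‖·‖`. Translating a locally integrable function by points of a compact set moves its mass over
a compact set `K` at most onto the compact set `K - S`, so a superposition of such translates with
summable coefficients converges absolutely in `L¹_loc`; its partial sums are dominated by the sum of
the norms, and the same limit theorem applies once more.
-/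

open Filter Topology Module
open scoped ENNReal InnerProductSpace Pointwise

section LocallyDominatedConvergence

variable {X F κ : Type*} [TopologicalSpace X] [MeasurableSpace X] {μ : Measure X}
  [NormedAddCommGroup F] {l : Filter κ} [l.IsCountablyGenerated]
  {f : κ → X → F} {g : X → F} {bound : X → ℝ}

theorem locallyIntegrable_of_tendsto_ae [SecondCountableTopology X] [l.NeBot]
    (hf : ∀ n, LocallyIntegrable (f n) μ) (hbound : LocallyIntegrable bound μ)
    (hle : ∀ n, ∀ᵐ p ∂μ, ‖f n p‖ ≤ bound p)
    (hlim : ∀ᵐ p ∂μ, Tendsto (fun n => f n p) l (𝓝 (g p))) : LocallyIntegrable g μ := by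
  obtain ⟨u, hu⟩ := l.exists_seq_tendsto
  refine hbound.mono
    (aestronglyMeasurable_of_tendsto_ae l (fun n => (hf n).aestronglyMeasurable) hlim) ?_
  filter_upwards [hlim, ae_all_iff.2 fun m => hle (u m)] with p hp hpu
  exact (le_of_tendsto (hp.comp hu).norm (.of_forall hpu)).trans (le_abs_self _)

theorem tendsto_integral_smul_of_locally_dominated [OpensMeasurableSpace X] [T2Space X]
    [NormedSpace ℝ F] {ψ : X → ℝ} (hψ : Continuous ψ) (hψ' : HasCompactSupport ψ)
    (hf : ∀ n, LocallyIntegrable (f n) μ) (hbound : LocallyIntegrable bound μ)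
    (hle : ∀ n, ∀ᵐ p ∂μ, ‖f n p‖ ≤ bound p)
    (hlim : ∀ᵐ p ∂μ, Tendsto (fun n => f n p) l (𝓝 (g p))) :
    Tendsto (fun n => ∫ p, ψ p • f n p ∂μ) l (𝓝 (∫ p, ψ p • g p ∂μ)) := by
  refine tendsto_integral_filter_of_dominated_convergence (fun p => ‖ψ p‖ • bound p)
    (.of_forall fun n => ((hf n).integrable_smul_left_of_hasCompactSupport hψ hψ').1)
    (.of_forall fun n => ?_)
    (hbound.integrable_smul_left_of_hasCompactSupport hψ.norm hψ'.norm) ?_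
  · filter_upwards [hle n] with p hp
    rw [norm_smul, smul_eq_mul]
    gcongr
  · filter_upwards [hlim] with p hp
    exact hp.const_smul (ψ p)

end LocallyDominatedConvergence

/-- The series `∑ i, f i` of locally integrable functions converges absolutely in `L¹(K)` for every
compact set `K`. -/
structure LocallyL1Summable {X F ι : Type*} [TopologicalSpace X] [MeasurableSpace X]
    [NormedAddCommGroup F] (f : ι → X → F) (μ : Measure X) : Prop where
  locallyIntegrable (i : ι) : LocallyIntegrable (f i) μ
  tsum_lintegral_ne_top {K : Set X} (hK : IsCompact K) : ∑' i, ∫⁻ p in K, ‖f i p‖ₑ ∂μ ≠ ∞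

namespace LocallyL1Summable

variable {X F ι : Type*} [TopologicalSpace X] [SecondCountableTopology X] [MeasurableSpace X]
  {μ : Measure X} [NormedAddCommGroup F] [Countable ι] {f : ι → X → F}

theorem lintegral_tsum_ne_top (hf : LocallyL1Summable f μ) {K : Set X} (hK : IsCompact K) :
    ∫⁻ p in K, ∑' i, ‖f i p‖ₑ ∂μ ≠ ∞ := by
  rw [lintegral_tsum fun i => (hf.locallyIntegrable i).aestronglyMeasurable.enorm.restrict]
  exact hf.tsum_lintegral_ne_top hK

theorem ae_summable_norm [LocallyCompactSpace X] (hf : LocallyL1Summable f μ) :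
    ∀ᵐ p ∂μ, Summable fun i => ‖f i p‖ := by
  have hmeas : AEMeasurable (fun p => ∑' i, ‖f i p‖ₑ) μ :=
    .tsum fun i => (hf.locallyIntegrable i).aestronglyMeasurable.enorm
  rw [← μ.restrict_univ, ← iUnion_compactCovering X, ae_restrict_iUnion_iff]
  intro n
  have h_finite := hf.lintegral_tsum_ne_top (isCompact_compactCovering X n)
  filter_upwards [ae_lt_top' hmeas.restrict h_finite] with p hp
  exact tsum_enorm_ne_top_iff_summable_norm.1 hp.ne

theorem locallyIntegrable_tsum_norm [LocallyCompactSpace X] (hf : LocallyL1Summable f μ) :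
    LocallyIntegrable (fun p => ∑' i, ‖f i p‖) μ := by
  have hmeas : AEStronglyMeasurable (fun p => ∑' i, ‖f i p‖) μ :=
    aestronglyMeasurable_of_tendsto_ae atTop (f := fun (s : Finset ι) p => ∑ i ∈ s, ‖f i p‖)
      (fun s => Finset.aestronglyMeasurable_fun_sum s fun i _ =>
        (hf.locallyIntegrable i).aestronglyMeasurable.norm)
      (hf.ae_summable_norm.mono fun _ hp => hp.hasSum)
  refine locallyIntegrable_iff.2 fun K hK => ⟨hmeas.restrict, ?_⟩
  refine (lintegral_mono fun p => ?_).trans_lt (hf.lintegral_tsum_ne_top hK).lt_top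
  simpa only [enorm_norm] using enorm_tsum_le_tsum_enorm (f := fun i => ‖f i p‖)

end LocallyL1Summable

section Translates

variable {G F ι : Type*} [AddGroup G] [TopologicalSpace G] [IsTopologicalAddGroup G]
  [MeasurableSpace G] [BorelSpace G] {μ : Measure G} [μ.IsAddRightInvariant]

theorem setLIntegral_comp_sub_right_le {K S : Set G} {a : G} (ha : a ∈ S) (f : G → ℝ≥0∞) :
    ∫⁻ p in K, f (p - a) ∂μ ≤ ∫⁻ q in K - S, f q ∂μ :=
  calc ∫⁻ p in K, f (p - a) ∂μ
      ≤ ∫⁻ p in (· - a) ⁻¹' (K - S), f (p - a) ∂μ :=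
        lintegral_mono_set fun _ hp => Set.sub_mem_sub hp ha
    _ = ∫⁻ q in K - S, f q ∂μ :=
        (measurePreserving_sub_right μ a).setLIntegral_comp_preimage_emb
          (measurableEmbedding_subRight a) f (K - S)

omit [MeasurableSpace G] [BorelSpace G] in
theorem isCompact_sub {K S : Set G} (hK : IsCompact K) (hS : IsCompact S) : IsCompact (K - S) := by
  simpa only [Set.sub_image_prod] using (hK.prod hS).image continuous_sub

theorem locallyIntegrable_comp_sub_right [NormedAddCommGroup F] {f : G → F}
    (hf : LocallyIntegrable f μ) (a : G) : LocallyIntegrable (fun p => f (p - a)) μ := by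
  rw [← map_sub_right_eq_self μ a] at hf
  exact (locallyIntegrable_map_homeomorph (Homeomorph.subRight a)).1 hf

theorem locallyL1Summable_smul_comp_sub_right {𝕜 : Type*} [NormedField 𝕜] [NormedAddCommGroup F]
    [NormedSpace 𝕜 F] {f : G → F} (hf : LocallyIntegrable f μ) {S : Set G} (hS : IsCompact S)
    {x : ι → G} (hx : ∀ i, x i ∈ S) {c : ι → 𝕜} (hc : Summable fun i => ‖c i‖) :
    LocallyL1Summable (fun i p => c i • f (p - x i)) μ where
  locallyIntegrable i := (locallyIntegrable_comp_sub_right hf (x i)).smul (c i)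
  tsum_lintegral_ne_top {K} hK := by
    have hle : ∑' i, ∫⁻ p in K, ‖c i • f (p - x i)‖ₑ ∂μ
        ≤ (∑' i, ‖c i‖ₑ) * ∫⁻ q in K - S, ‖f q‖ₑ ∂μ := by
      rw [← ENNReal.tsum_mul_right]
      refine ENNReal.tsum_le_tsum fun i => ?_
      simp only [enorm_smul]
      rw [lintegral_const_mul' _ _ enorm_ne_top]
      gcongr ‖c i‖ₑ * ?_
      exact setLIntegral_comp_sub_right_le (hx i) fun q => ‖f q‖ₑ
    exact ne_top_of_le_ne_top (ENNReal.mul_ne_top (tsum_enorm_ne_top_iff_summable_norm.2 hc)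
      (hf.integrableOn_isCompact (isCompact_sub hK hS)).2.ne) hle

end Translates

/-- `f'` is the distributional derivative of `f` in the direction `v`, both being locally
integrable. Testing against `C¹` functions is equivalent, by mollification, to testing against
smooth ones. -/
structure HasWeakLineDeriv {E F : Type*} [NormedAddCommGroup E] [NormedSpace ℝ E]
    [MeasurableSpace E] [NormedAddCommGroup F] [NormedSpace ℝ F]
    (f f' : E → F) (v : E) (μ : Measure E) : Prop where
  locallyIntegrable : LocallyIntegrable f μ
  locallyIntegrable_deriv : LocallyIntegrable f' μ
  integral_fderiv_smul {φ : E → ℝ} (hφ : ContDiff ℝ 1 φ) (hφ' : HasCompactSupport φ) :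
    ∫ p, fderiv ℝ φ p v • f p ∂μ = -∫ p, φ p • f' p ∂μ

theorem continuous_fderiv_apply {E F : Type*} [NormedAddCommGroup E] [NormedSpace ℝ E]
    [NormedAddCommGroup F] [NormedSpace ℝ F] {f : E → F} (hf : ContDiff ℝ 1 f) (v : E) :
    Continuous fun p => fderiv ℝ f p v :=
  (hf.continuous_fderiv one_ne_zero).clm_apply continuous_const

namespace HasWeakLineDeriv

variable {E F : Type*} [NormedAddCommGroup E] [NormedSpace ℝ E] [MeasurableSpace E] [BorelSpace E]
  [NormedAddCommGroup F] [NormedSpace ℝ F] {μ : Measure E} {f f' : E → F} {v : E}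

theorem of_contDiff [FiniteDimensional ℝ E] [μ.IsAddHaarMeasure] (hf : ContDiff ℝ 1 f) (v : E) :
    HasWeakLineDeriv f (fun p => fderiv ℝ f p v) v μ := by
  have hf' : Continuous fun p => fderiv ℝ f p v := continuous_fderiv_apply hf v
  refine ⟨hf.continuous.locallyIntegrable, hf'.locallyIntegrable, fun {φ} hφ hφ' => ?_⟩
  have hdφ : Continuous fun p => fderiv ℝ φ p v := continuous_fderiv_apply hφ v
  rw [← neg_eq_iff_eq_neg, eq_comm]
  refine integral_smul_fderiv_eq_neg_fderiv_smul_of_integrable ?_ ?_ ?_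
    (fun p _ => hφ.differentiable one_ne_zero p) (fun p _ => hf.differentiable one_ne_zero p)
  · exact (hdφ.smul hf.continuous).integrable_of_hasCompactSupport
      (hφ'.fderiv_apply ℝ v).smul_right
  · exact (hφ.continuous.smul hf').integrable_of_hasCompactSupport hφ'.smul_right
  · exact (hφ.continuous.smul hf.continuous).integrable_of_hasCompactSupport hφ'.smul_right

omit [BorelSpace E] in
theorem const_smul (h : HasWeakLineDeriv f f' v μ) (c : ℝ) :
    HasWeakLineDeriv (fun p => c • f p) (fun p => c • f' p) v μ where
  locallyIntegrable := h.locallyIntegrable.smul c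
  locallyIntegrable_deriv := h.locallyIntegrable_deriv.smul c
  integral_fderiv_smul hφ hφ' := by
    simp only [smul_comm _ c, integral_smul, h.integral_fderiv_smul hφ hφ', smul_neg]

theorem comp_sub_right [μ.IsAddRightInvariant] (h : HasWeakLineDeriv f f' v μ) (a : E) :
    HasWeakLineDeriv (fun p => f (p - a)) (fun p => f' (p - a)) v μ where
  locallyIntegrable := locallyIntegrable_comp_sub_right h.locallyIntegrable a
  locallyIntegrable_deriv := locallyIntegrable_comp_sub_right h.locallyIntegrable_deriv a
  integral_fderiv_smul {φ} hφ hφ' := by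
    have h_translated := h.integral_fderiv_smul (φ := fun p => φ (p + a))
      (hφ.comp (contDiff_id.add contDiff_const)) (hφ'.comp_homeomorph (Homeomorph.addRight a))
    rw [← integral_add_right_eq_self (fun p => fderiv ℝ φ p v • f (p - a)) a,
      ← integral_add_right_eq_self (fun p => φ p • f' (p - a)) a]
    simpa only [fderiv_comp_add_right, add_sub_cancel_right] using h_translated

theorem finsetSum {ι : Type*} {f f' : ι → E → F} (h : ∀ i, HasWeakLineDeriv (f i) (f' i) v μ)
    (s : Finset ι) :
    HasWeakLineDeriv (fun p => ∑ i ∈ s, f i p) (fun p => ∑ i ∈ s, f' i p) v μ where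
  locallyIntegrable := locallyIntegrable_finsetSum s fun i _ => (h i).locallyIntegrable
  locallyIntegrable_deriv := locallyIntegrable_finsetSum s fun i _ => (h i).locallyIntegrable_deriv
  integral_fderiv_smul {φ} hφ hφ' := by
    have hdφ : Continuous fun p => fderiv ℝ φ p v := continuous_fderiv_apply hφ v
    simp only [Finset.smul_sum]
    rw [integral_finsetSum s fun i _ => (h i).locallyIntegrable
        |>.integrable_smul_left_of_hasCompactSupport hdφ (hφ'.fderiv_apply ℝ v),
      integral_finsetSum s fun i _ => (h i).locallyIntegrable_deriv
        |>.integrable_smul_left_of_hasCompactSupport hφ.continuous hφ', ← Finset.sum_neg_distrib]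
    exact Finset.sum_congr rfl fun i _ => (h i).integral_fderiv_smul hφ hφ'

section Limits

variable [SecondCountableTopology E]

theorem of_tendsto {κ : Type*} {l : Filter κ} [l.NeBot] [l.IsCountablyGenerated]
    {u u' : κ → E → F} {bound bound' : E → ℝ} (h : ∀ n, HasWeakLineDeriv (u n) (u' n) v μ)
    (hbound : LocallyIntegrable bound μ) (hle : ∀ n, ∀ᵐ p ∂μ, ‖u n p‖ ≤ bound p)
    (hbound' : LocallyIntegrable bound' μ) (hle' : ∀ n, ∀ᵐ p ∂μ, ‖u' n p‖ ≤ bound' p)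
    (hlim : ∀ᵐ p ∂μ, Tendsto (fun n => u n p) l (𝓝 (f p)))
    (hlim' : ∀ᵐ p ∂μ, Tendsto (fun n => u' n p) l (𝓝 (f' p))) : HasWeakLineDeriv f f' v μ where
  locallyIntegrable :=
    locallyIntegrable_of_tendsto_ae (fun n => (h n).locallyIntegrable) hbound hle hlim
  locallyIntegrable_deriv :=
    locallyIntegrable_of_tendsto_ae (fun n => (h n).locallyIntegrable_deriv) hbound' hle' hlim'
  integral_fderiv_smul hφ hφ' := by
    refine tendsto_nhds_unique (tendsto_integral_smul_of_locally_dominated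
      (continuous_fderiv_apply hφ v) (hφ'.fderiv_apply ℝ v)
      (fun n => (h n).locallyIntegrable) hbound hle hlim) ?_
    simp only [(h _).integral_fderiv_smul hφ hφ']
    exact (tendsto_integral_smul_of_locally_dominated hφ.continuous hφ'
      (fun n => (h n).locallyIntegrable_deriv) hbound' hle' hlim').neg

theorem tsum [LocallyCompactSpace E] [CompleteSpace F] {ι : Type*} [Countable ι]
    {f f' : ι → E → F} (h : ∀ i, HasWeakLineDeriv (f i) (f' i) v μ)
    (hf : LocallyL1Summable f μ) (hf' : LocallyL1Summable f' μ) :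
    HasWeakLineDeriv (fun p => ∑' i, f i p) (fun p => ∑' i, f' i p) v μ := by
  have norm_sum_le {g : ι → E → F} (hg : LocallyL1Summable g μ) (s : Finset ι) :
      ∀ᵐ p ∂μ, ‖∑ i ∈ s, g i p‖ ≤ ∑' i, ‖g i p‖ :=
    hg.ae_summable_norm.mono fun p hp =>
      (norm_sum_le s fun i => g i p).trans (hp.sum_le_tsum s fun i _ => norm_nonneg _)
  have tendsto_sum {g : ι → E → F} (hg : LocallyL1Summable g μ) :
      ∀ᵐ p ∂μ, Tendsto (fun s : Finset ι => ∑ i ∈ s, g i p) atTop (𝓝 (∑' i, g i p)) :=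
    hg.ae_summable_norm.mono fun p hp => hp.of_norm.hasSum
  exact of_tendsto (finsetSum h) hf.locallyIntegrable_tsum_norm (norm_sum_le hf)
    hf'.locallyIntegrable_tsum_norm (norm_sum_le hf') (tendsto_sum hf) (tendsto_sum hf')

end Limits

end HasWeakLineDeriv

theorem abs_half_log_sq_add_le {r ε : ℝ} (hr : 0 < r) (hε : 0 ≤ ε) (hε' : ε ≤ 1) :
    |1 / 2 * log (r ^ 2 + ε)| ≤ r ^ 2 + r⁻¹ := by
  have h_upper : log (r ^ 2 + ε) ≤ r ^ 2 + ε - 1 := log_le_sub_one_of_pos (by positivity)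
  have h_lower : 2 * (1 - r⁻¹) ≤ log (r ^ 2 + ε) :=
    calc 2 * (1 - r⁻¹) ≤ 2 * log r := by gcongr; exact one_sub_inv_le_log_of_pos hr
      _ = log (r ^ 2) := by rw [log_pow, Nat.cast_ofNat]
      _ ≤ log (r ^ 2 + ε) := by gcongr; linarith
  rw [abs_le]
  constructor <;> linarith [sq_nonneg r, inv_pos.2 hr]

section LogNorm

variable {E : Type*} [NormedAddCommGroup E] [InnerProductSpace ℝ E]

theorem abs_inner_div_norm_sq_add_le (v p : E) {ε : ℝ} (hε : 0 ≤ ε) :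
    |⟪v, p⟫_ℝ / (‖p‖ ^ 2 + ε)| ≤ ‖v‖ * ‖p‖⁻¹ := by
  rcases eq_or_ne p 0 with rfl | hp
  · simp
  calc |⟪v, p⟫_ℝ / (‖p‖ ^ 2 + ε)| = |⟪v, p⟫_ℝ| / (‖p‖ ^ 2 + ε) := by
        rw [abs_div, abs_of_pos (by positivity : 0 < ‖p‖ ^ 2 + ε)]
    _ ≤ ‖v‖ * ‖p‖ / ‖p‖ ^ 2 := by
        gcongr
        · exact abs_real_inner_le_norm v p
        · linarith
    _ = ‖v‖ * ‖p‖⁻¹ := by field_simp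

theorem fderiv_half_log_norm_sq_add {ε : ℝ} (hε : 0 < ε) (p v : E) :
    fderiv ℝ (fun q : E => 1 / 2 * log (‖q‖ ^ 2 + ε)) p v = ⟪v, p⟫_ℝ / (‖p‖ ^ 2 + ε) := by
  have h := (((hasStrictFDerivAt_norm_sq p).hasFDerivAt.add_const ε).log
    (by positivity)).const_mul (1 / 2)
  rw [h.fderiv]
  simp only [smul_apply, coe_innerSL_apply, nsmul_eq_mul, Nat.cast_ofNat, smul_eq_mul,
    real_inner_comm]
  ring

variable [FiniteDimensional ℝ E] [MeasurableSpace E] [BorelSpace E] {μ : Measure E}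
  [μ.IsAddHaarMeasure]

theorem hasWeakLineDeriv_half_log_norm_sq_add {ε : ℝ} (hε : 0 < ε) (v : E) :
    HasWeakLineDeriv (fun p => 1 / 2 * log (‖p‖ ^ 2 + ε))
      (fun p => ⟪v, p⟫_ℝ / (‖p‖ ^ 2 + ε)) v μ := by
  have h_smooth : ContDiff ℝ 1 fun p : E => 1 / 2 * log (‖p‖ ^ 2 + ε) :=
    contDiff_const.mul (((contDiff_norm_sq ℝ).add contDiff_const).log fun p => by positivity)
  simpa only [fderiv_half_log_norm_sq_add hε] using HasWeakLineDeriv.of_contDiff h_smooth v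

theorem locallyIntegrable_norm_inv (hE : 2 ≤ finrank ℝ E) :
    LocallyIntegrable (fun p : E => ‖p‖⁻¹) μ := by
  have hE' : (1 : ℝ) < finrank ℝ E := by exact_mod_cast hE
  refine locallyIntegrable_of_norm_le_rpow (by lia) (C := 1) hE' (.of_forall fun p => ?_)
    measurable_norm.inv.aestronglyMeasurable
  simp only [norm_inv, norm_norm, rpow_neg_one, one_mul, le_refl]

theorem hasWeakLineDeriv_log_norm (hE : 2 ≤ finrank ℝ E) (v : E) :
    HasWeakLineDeriv (fun p => log ‖p‖) (fun p => ⟪v, p⟫_ℝ / ‖p‖ ^ 2) v μ := by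
  have : Nontrivial E := nontrivial_of_finrank_pos (R := ℝ) (by lia)
  obtain ⟨ε, -, hε, hε_lim⟩ := exists_seq_strictAnti_tendsto' (zero_lt_one (α := ℝ))
  have h_sq_lim (p : E) : Tendsto (fun n => ‖p‖ ^ 2 + ε n) atTop (𝓝 (‖p‖ ^ 2)) := by
    simpa only [add_zero] using hε_lim.const_add (‖p‖ ^ 2)
  have h_ne : ∀ᵐ p ∂μ, p ≠ 0 := Measure.ae_ne μ 0
  have h_inv : LocallyIntegrable (fun p : E => ‖p‖⁻¹) μ := locallyIntegrable_norm_inv hE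
  have h_sq : LocallyIntegrable (fun p : E => ‖p‖ ^ 2) μ :=
    (continuous_norm.pow 2).locallyIntegrable
  refine .of_tendsto (l := atTop) (fun n => hasWeakLineDeriv_half_log_norm_sq_add (hε n).1 v)
    (h_sq.add h_inv) (fun n => ?_) (h_inv.smul ‖v‖) (fun n => .of_forall fun p => ?_) ?_ ?_
  · filter_upwards [h_ne] with p hp
    exact abs_half_log_sq_add_le (norm_pos_iff.2 hp) (hε n).1.le (hε n).2.le
  · exact abs_inner_div_norm_sq_add_le v p (hε n).1.le
  · filter_upwards [h_ne] with p hp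
    have h_log : log ‖p‖ = 1 / 2 * log (‖p‖ ^ 2) := by rw [log_pow]; push_cast; ring
    rw [h_log]
    exact ((h_sq_lim p).log (by simpa using hp)).const_mul (1 / 2)
  · filter_upwards [h_ne] with p hp
    exact tendsto_const_nhds.div (h_sq_lim p) (by simpa using hp)

theorem log_potential_distributional_gradient_general (hE : 2 ≤ finrank ℝ E) {ι : Type*}
    [Countable ι] {x : ι → E} (hx : Bornology.IsBounded (Set.range x)) {c : ι → ℝ}
    (hc : Summable fun i => |c i|) :
    (∀ᵐ p ∂μ, Summable fun i => |c i * log ‖p - x i‖|) ∧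
    ∀ v : E, (∀ᵐ p ∂μ, Summable fun i => |c i * (⟪v, p - x i⟫_ℝ / ‖p - x i‖ ^ 2)|) ∧
      HasWeakLineDeriv (fun p => ∑' i, c i * log ‖p - x i‖)
        (fun p => ∑' i, c i * (⟪v, p - x i⟫_ℝ / ‖p - x i‖ ^ 2)) v μ := by
  have h_translates {k : E → ℝ} (hk : LocallyIntegrable k μ) :
      LocallyL1Summable (fun i p => c i • k (p - x i)) μ :=
    locallyL1Summable_smul_comp_sub_right hk hx.isCompact_closure
      (fun i => subset_closure ⟨i, rfl⟩) hc
  have h_log := h_translates (hasWeakLineDeriv_log_norm hE 0).locallyIntegrable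
  refine ⟨h_log.ae_summable_norm, fun v => ?_⟩
  have h_deriv : HasWeakLineDeriv _ _ v μ := hasWeakLineDeriv_log_norm hE v
  have h_grad := h_translates h_deriv.locallyIntegrable_deriv
  exact ⟨h_grad.ae_summable_norm,
    .tsum (fun i => (h_deriv.comp_sub_right (x i)).const_smul (c i)) h_log h_grad⟩

end LogNorm

/-- **`W^{1,1}` regularity of the logarithmic potential** (proof of Theorem 2.4 of the
paper).  With `∑ |c i| < ∞` and `x i ∈ B̄(0,R)`, the series
`ℱ(p) = ∑_i (c i / 2π) log |p − x i|` and `G_α(p) = ∑_i (c i / 2π) (p − x i)_α / |p − x i|²`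
converge absolutely a.e., are integrable on bounded measurable sets, and `G` is the
distributional gradient of `ℱ`. -/
theorem log_potential_distributional_gradient
    (R : ℝ) (hR : 0 < R) (x : ℕ → EuclideanSpace ℝ (Fin 2))
    (hx : ∀ i, x i ∈ Metric.closedBall (0 : EuclideanSpace ℝ (Fin 2)) R)
    (c : ℕ → ℝ) (hc : Summable fun i => |c i|) :
    (∀ᵐ p : EuclideanSpace ℝ (Fin 2),
      (Summable fun i => |c i / (2 * π) * Real.log ‖p - x i‖|) ∧
      (∀ α : Fin 2, Summable fun i => |c i / (2 * π) * ((p - x i) α / ‖p - x i‖ ^ 2)|)) ∧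
    (∀ A : Set (EuclideanSpace ℝ (Fin 2)), MeasurableSet A → Bornology.IsBounded A →
      IntegrableOn (fun p => ∑' i, c i / (2 * π) * Real.log ‖p - x i‖) A volume ∧
      ∀ α : Fin 2,
        IntegrableOn (fun p => ∑' i, c i / (2 * π) * ((p - x i) α / ‖p - x i‖ ^ 2))
          A volume) ∧
    (∀ φ : EuclideanSpace ℝ (Fin 2) → ℝ, ContDiff ℝ (⊤ : ℕ∞) φ → HasCompactSupport φ →
      ∀ α : Fin 2,
        ∫ p : EuclideanSpace ℝ (Fin 2),
            (∑' i, c i / (2 * π) * Real.log ‖p - x i‖) * pd α φ p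
          = -∫ p : EuclideanSpace ℝ (Fin 2),
              (∑' i, c i / (2 * π) * ((p - x i) α / ‖p - x i‖ ^ 2)) * φ p) := by
  have hd : Summable fun i => |c i / (2 * π)| := by
    simpa only [abs_div] using hc.div_const |2 * π|
  obtain ⟨h_log, h_deriv⟩ := log_potential_distributional_gradient_general (μ := volume)
    finrank_euclideanSpace_fin.ge
    (Metric.isBounded_closedBall.subset (Set.range_subset_iff.2 hx)) hd
  have h_coord (α : Fin 2) := h_deriv (EuclideanSpace.single α 1)
  simp only [EuclideanSpace.inner_single_left, map_one, one_mul] at h_coord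
  refine ⟨?_, fun A _ hA => ?_, fun φ hφ hφ' α => ?_⟩
  · filter_upwards [h_log, ae_all_iff.2 fun α => (h_coord α).1] with p hp hp'
    exact ⟨hp, hp'⟩
  · have integrableOn_A {f : EuclideanSpace ℝ (Fin 2) → ℝ} (hf : LocallyIntegrable f) :
        IntegrableOn f A :=
      (hf.integrableOn_isCompact hA.isCompact_closure).mono_set subset_closure
    exact ⟨integrableOn_A (h_coord 0).2.locallyIntegrable,
      fun α => integrableOn_A (h_coord α).2.locallyIntegrable_deriv⟩
  · simpa only [pd, smul_eq_mul, mul_comm] using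
      (h_coord α).2.integral_fderiv_smul (hφ.of_le (mod_cast le_top)) hφ'
end
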